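/- Let d ≥ 1, let η > 0, and let O be a nonempty open subset of the open unit ball B(0,1) ⊂ ℝ^d. Then there exists μ ∈ (0,1) such that for every M > 0 and every function F : ℝ^d → ℂ which is infinitely differentiable on the open ball B(0,2) and satisfies the derivative bounds ‖D^k F(x)‖ ≤ M · k! / η^k for every k ∈ ℕ and every x ∈ B(0,2) (where ‖D^k F(x)‖ is the operator norm of the k-th Fréchet derivative), one has |F(x)| ≤ (2M)^{1−μ} · ( sup_{z ∈ O} |F(z)| )^{μ} for every x ∈ B(0,1). -/

import Mathlib

open Metric

/-!
If `‖v‖ ≤ η / 14`, the Taylor series of `F` at `p` extends `t ↦ F (p + t • v)` to a holomorphic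
function on the disc of radius `7`, bounded there by `2M`. The substitution `t = cosh w` turns the
segment `[-1, 1]` into the line `re w = 0`, and `cosh x = 2` implies `cosh (2 * x) = 7`; so
Hadamard's three lines theorem bounds `‖F (p + 2 • v)‖` by the geometric mean of `2M` and of a bound
for `‖F‖` on the segment from `p - v` to `p + v`. Starting in `O` and repeating this along the
segment to an arbitrary point takes a number `m` of steps that does not depend on `F`, which gives
the exponent `μ = 2⁻ᵐ`.
-/

open Complex.HadamardThreeLines (verticalStrip verticalClosedStrip)
open scoped Nat Topology

section OneVariable

variable {V : Type*} [NormedAddCommGroup V] [NormedSpace ℂ V]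

lemma norm_complex_cosh_le (w : ℂ) : ‖Complex.cosh w‖ ≤ Real.cosh w.re := by
  have h := norm_add_le (Complex.exp w) (Complex.exp (-w))
  rw [Complex.norm_exp, Complex.norm_exp, Complex.neg_re] at h
  rw [Complex.cosh, Real.cosh_eq, norm_div, Complex.norm_ofNat]
  gcongr

lemma complex_cosh_mem_closedBall {L : ℝ} {w : ℂ} (hw : w ∈ verticalClosedStrip 0 L) :
    Complex.cosh w ∈ closedBall (0 : ℂ) (Real.cosh L) := by
  rw [mem_closedBall_zero_iff]
  refine (norm_complex_cosh_le w).trans (Real.cosh_le_cosh.2 ?_)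
  exact abs_le_abs_of_nonneg hw.1 hw.2

lemma norm_comp_cosh_le_interp {f : ℂ → V} {B S L : ℝ} (hL : 0 < L)
    (hf : DifferentiableOn ℂ f (closedBall 0 (Real.cosh L)))
    (hB : ∀ z ∈ closedBall (0 : ℂ) (Real.cosh L), ‖f z‖ ≤ B)
    (hS : ∀ t : ℝ, |t| ≤ 1 → ‖f t‖ ≤ S) {w : ℂ} (hw : w ∈ verticalClosedStrip 0 L) :
    ‖f (Complex.cosh w)‖ ≤ S ^ (1 - w.re / L) * B ^ (w.re / L) := by
  have hdiff : DiffContOnCl ℂ (fun w ↦ f (Complex.cosh w)) (verticalStrip 0 L) := by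
    apply DifferentiableOn.diffContOnCl
    rw [verticalStrip, Complex.closure_preimage_re, closure_Ioo hL.ne]
    exact hf.comp Complex.differentiable_cosh.differentiableOn
      fun w hw ↦ complex_cosh_mem_closedBall hw
  have hbdd : ∀ w ∈ verticalClosedStrip 0 L, ‖f (Complex.cosh w)‖ ≤ B :=
    fun w hw ↦ hB _ (complex_cosh_mem_closedBall hw)
  have hleft : ∀ w ∈ Complex.re ⁻¹' {0}, ‖f (Complex.cosh w)‖ ≤ S := by
    intro w (hw : w.re = 0)
    have hw_im : w.im * Complex.I = w := by simpa [hw] using Complex.re_add_im w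
    rw [← hw_im, Complex.cosh_mul_I, ← Complex.ofReal_cos]
    exact hS _ (Real.abs_cos_le_one _)
  have hright : ∀ w ∈ Complex.re ⁻¹' {L}, ‖f (Complex.cosh w)‖ ≤ B :=
    fun w (hw : w.re = L) ↦ hbdd w ⟨hw ▸ hL.le, hw.le⟩
  simpa only [sub_zero] using
    Complex.HadamardThreeLines.norm_le_interp_of_mem_verticalClosedStrip' hL hw hdiff
      ⟨B, Set.forall_mem_image.2 hbdd⟩ hleft hright

lemma norm_apply_two_le {f : ℂ → V} {B S : ℝ} (hf : DifferentiableOn ℂ f (closedBall 0 7))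
    (hB : ∀ z ∈ closedBall (0 : ℂ) 7, ‖f z‖ ≤ B) (hS : ∀ t : ℝ, |t| ≤ 1 → ‖f t‖ ≤ S) :
    ‖f 2‖ ≤ S ^ (1 / 2 : ℝ) * B ^ (1 / 2 : ℝ) := by
  set x := Real.arcosh 2
  have hx : 0 < x := Real.arcosh_pos (by norm_num)
  have hcosh : Real.cosh x = 2 := Real.cosh_arcosh (by norm_num)
  have hcosh_two : Real.cosh (2 * x) = 7 := by
    rw [Real.cosh_two_mul, Real.sinh_sq, hcosh]
    norm_num
  have hstrip : (x : ℂ) ∈ verticalClosedStrip 0 (2 * x) :=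
    ⟨hx.le, by rw [Complex.ofReal_re]; linarith⟩
  have h := norm_comp_cosh_le_interp (by positivity) (hcosh_two ▸ hf) (hcosh_two ▸ hB) hS hstrip
  have hhalf : x / (2 * x) = 1 / 2 := by field_simp
  rwa [← Complex.ofReal_cosh, hcosh, Complex.ofReal_ofNat, Complex.ofReal_re, hhalf,
    sub_half] at h

variable {a : ℕ → V} {M q : ℝ}

lemma norm_pow_smul_le (ha : ∀ k, ‖a k‖ ≤ M * q ^ k) (z : ℂ) (k : ℕ) :
    ‖z ^ k • a k‖ ≤ M * (q * ‖z‖) ^ k := by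
  rw [norm_smul, norm_pow, mul_pow, ← mul_assoc, mul_comm (‖z‖ ^ k)]
  gcongr
  exact ha k

lemma norm_tsum_pow_smul_le (hq : 0 ≤ q) (ha : ∀ k, ‖a k‖ ≤ M * q ^ k) {z : ℂ}
    (hz : q * ‖z‖ < 1) : ‖∑' k, z ^ k • a k‖ ≤ M * (1 - q * ‖z‖)⁻¹ :=
  tsum_of_norm_bounded ((hasSum_geometric_of_lt_one (by positivity) hz).mul_left M)
    (norm_pow_smul_le ha z)

lemma differentiableOn_tsum_pow_smul [CompleteSpace V] (hq : 0 ≤ q)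
    (ha : ∀ k, ‖a k‖ ≤ M * q ^ k) :
    DifferentiableOn ℂ (fun z : ℂ ↦ ∑' k, z ^ k • a k) {z | q * ‖z‖ < 1} := by
  intro z hz
  obtain ⟨ρ, hzρ, hρ⟩ := exists_between (show q * ‖z‖ < 1 from hz)
  have hρ0 : 0 ≤ ρ := (mul_nonneg hq (norm_nonneg z)).trans hzρ.le
  have hM : 0 ≤ M := by simpa using (norm_nonneg _).trans (ha 0)
  have hopen : IsOpen {w : ℂ | q * ‖w‖ < ρ} := isOpen_lt (by fun_prop) continuous_const
  have hbound : ∀ k, ∀ w ∈ {w : ℂ | q * ‖w‖ < ρ}, ‖w ^ k • a k‖ ≤ M * ρ ^ k := by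
    intro k w (hw : q * ‖w‖ < ρ)
    refine (norm_pow_smul_le ha w k).trans ?_
    gcongr
  have hdiff := Complex.differentiableOn_tsum_of_summable_norm (F := fun k z ↦ z ^ k • a k)
    ((summable_geometric_of_lt_one hρ0 hρ).mul_left M) (fun k ↦ by fun_prop) hopen hbound
  exact (hdiff.differentiableAt (hopen.mem_nhds hzρ)).differentiableWithinAt

lemma norm_tsum_two_pow_smul_le [CompleteSpace V] {S : ℝ} (ha : ∀ k, ‖a k‖ ≤ M * (1 / 14) ^ k)
    (hS : ∀ t : ℝ, |t| ≤ 1 → ‖∑' k, (t : ℂ) ^ k • a k‖ ≤ S) :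
    ‖∑' k, (2 : ℂ) ^ k • a k‖ ≤ S ^ (1 / 2 : ℝ) * (2 * M) ^ (1 / 2 : ℝ) := by
  have hM : 0 ≤ M := by simpa using (norm_nonneg _).trans (ha 0)
  have hball : ∀ z ∈ closedBall (0 : ℂ) 7, 1 / 14 * ‖z‖ ≤ 1 / 2 := by
    intro z hz
    linarith [mem_closedBall_zero_iff.1 hz]
  refine norm_apply_two_le (f := fun z ↦ ∑' k, z ^ k • a k)
    ((differentiableOn_tsum_pow_smul (by norm_num) ha).mono fun z hz ↦
      (hball z hz).trans_lt (by norm_num)) (fun z hz ↦ ?_) hS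
  calc ‖∑' k, z ^ k • a k‖
      ≤ M * (1 - 1 / 14 * ‖z‖)⁻¹ :=
        norm_tsum_pow_smul_le (by norm_num) ha ((hball z hz).trans_lt (by norm_num))
    _ ≤ M * (1 / 2 : ℝ)⁻¹ := by gcongr; linarith [hball z hz]
    _ = 2 * M := by ring

end OneVariable

section CauchyBounds

variable {E V : Type*} [NormedAddCommGroup E] [NormedSpace ℝ E] [NormedAddCommGroup V]

lemma ordConnected_preimage_line {A : Set E} (hA : Convex ℝ A) (p v : E) :
    ((fun t : ℝ ↦ p + t • v) ⁻¹' A).OrdConnected := by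
  have h := (hA.affine_preimage (AffineMap.lineMap p (p + v) : ℝ →ᵃ[ℝ] E)).ordConnected
  simpa [Set.preimage, AffineMap.lineMap_apply, add_comm] using h

/-- Cauchy estimates of size `M` and radius `η` for a function `F` at the points of `A`, as
satisfied by a function with a holomorphic extension bounded by `M`. Smoothness and derivatives
are taken in the whole space, so that `A` may have empty interior. -/
structure HasCauchyBoundsOn [NormedSpace ℝ V] (F : E → V) (M η : ℝ) (A : Set E) : Prop where
  contDiffAt : ∀ x ∈ A, ContDiffAt ℝ (⊤ : ℕ∞) F x
  norm_iteratedFDeriv_le : ∀ (k : ℕ), ∀ x ∈ A, ‖iteratedFDeriv ℝ k F x‖ ≤ M * k ! / η ^ k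

lemma hasCauchyBoundsOn_of_isOpen [NormedSpace ℝ V] {F : E → V} {M η : ℝ} {A : Set E}
    (hA : IsOpen A) (hF : ContDiffOn ℝ (⊤ : ℕ∞) F A)
    (hbound : ∀ (k : ℕ), ∀ x ∈ A, ‖iteratedFDerivWithin ℝ k F A x‖ ≤ M * k ! / η ^ k) :
    HasCauchyBoundsOn F M η A where
  contDiffAt x hx := hF.contDiffAt (hA.mem_nhds hx)
  norm_iteratedFDeriv_le k x hx := by
    rw [← iteratedFDerivWithin_of_isOpen k hA hx]
    exact hbound k x hx

namespace HasCauchyBoundsOn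

section Real

variable [NormedSpace ℝ V] {F : E → V} {M η : ℝ} {A : Set E} {p v : E}

lemma mono {A' : Set E} (hF : HasCauchyBoundsOn F M η A) (h : A' ⊆ A) :
    HasCauchyBoundsOn F M η A' :=
  ⟨fun x hx ↦ hF.contDiffAt x (h hx), fun k x hx ↦ hF.norm_iteratedFDeriv_le k x (h hx)⟩

lemma norm_le (hF : HasCauchyBoundsOn F M η A) (hp : p ∈ A) : ‖F p‖ ≤ M := by
  simpa using hF.norm_iteratedFDeriv_le 0 p hp

lemma norm_iteratedFDeriv_apply_le (hF : HasCauchyBoundsOn F M η A) (hp : p ∈ A) (v : E) (k : ℕ) :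
    ‖iteratedFDeriv ℝ k F p fun _ ↦ v‖ ≤ k ! * (M * (‖v‖ / η) ^ k) :=
  calc ‖iteratedFDeriv ℝ k F p fun _ ↦ v‖
      ≤ ‖iteratedFDeriv ℝ k F p‖ * ‖v‖ ^ k := by
        simpa using (iteratedFDeriv ℝ k F p).le_opNorm fun _ ↦ v
    _ ≤ M * k ! / η ^ k * ‖v‖ ^ k := by gcongr; exact hF.norm_iteratedFDeriv_le k p hp
    _ = k ! * (M * (‖v‖ / η) ^ k) := by ring

lemma norm_taylorCoeff_le (hF : HasCauchyBoundsOn F M η A) (hp : p ∈ A) (v : E) (k : ℕ) :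
    ‖(k ! : ℝ)⁻¹ • iteratedFDeriv ℝ k F p fun _ ↦ v‖ ≤ M * (‖v‖ / η) ^ k := by
  rw [norm_smul, norm_inv, RCLike.norm_natCast, inv_mul_le_iff₀ (by positivity)]
  exact hF.norm_iteratedFDeriv_apply_le hp v k

lemma norm_sub_taylorSum_le [CompleteSpace V] (hF : HasCauchyBoundsOn F M η A) (hA : Convex ℝ A)
    (hp : p ∈ A) (hpv : p + v ∈ A) (n : ℕ) :
    ‖F (p + v) - ∑ k ∈ Finset.range (n + 1),
      (k ! : ℝ)⁻¹ • iteratedFDeriv ℝ k F p fun _ ↦ v‖ ≤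
      M * ((n + 1 : ℕ) * (‖v‖ / η) ^ (n + 1)) := by
  have hseg : ∀ t ∈ Set.Icc (0 : ℝ) 1, p + t • v ∈ A := fun t ht ↦ hA.add_smul_mem hp hpv ht
  rw [map_add_eq_sum_add_integral_iteratedFDeriv (n := n) fun t ht ↦
      (hF.contDiffAt _ (hseg t ht)).of_le (by exact_mod_cast le_top),
    add_sub_cancel_left, norm_smul, norm_inv, RCLike.norm_natCast,
    inv_mul_le_iff₀ (by positivity)]
  have hintegrand : ∀ t ∈ Set.uIoc (0 : ℝ) 1,
      ‖(1 - t) ^ n • iteratedFDeriv ℝ (n + 1) F (p + t • v) fun _ ↦ v‖ ≤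
        (n + 1)! * (M * (‖v‖ / η) ^ (n + 1)) := by
    intro t ht
    rw [Set.uIoc_of_le zero_le_one] at ht
    have hpow : ‖(1 - t) ^ n‖ ≤ 1 := by
      rw [norm_pow]
      exact pow_le_one₀ (norm_nonneg _) (abs_le.2 ⟨by linarith [ht.2], by linarith [ht.1]⟩)
    rw [norm_smul]
    exact (mul_le_of_le_one_left (norm_nonneg _) hpow).trans
      (hF.norm_iteratedFDeriv_apply_le (hseg t ⟨ht.1.le, ht.2⟩) v (n + 1))
  refine (intervalIntegral.norm_integral_le_of_norm_le_const hintegrand).trans_eq ?_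
  rw [sub_zero, abs_one, Nat.factorial_succ]
  push_cast
  ring

lemma hasSum_taylor [CompleteSpace V] (hF : HasCauchyBoundsOn F M η A) (hA : Convex ℝ A)
    (hp : p ∈ A) (hpv : p + v ∈ A) (hv : ‖v‖ < η) :
    HasSum (fun k ↦ (k ! : ℝ)⁻¹ • iteratedFDeriv ℝ k F p fun _ ↦ v) (F (p + v)) := by
  have hη : 0 < η := (norm_nonneg v).trans_lt hv
  have hratio : ‖v‖ / η < 1 := (div_lt_one hη).2 hv
  have hsummable : Summable fun k ↦ ‖(k ! : ℝ)⁻¹ • iteratedFDeriv ℝ k F p fun _ ↦ v‖ :=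
    .of_nonneg_of_le (fun _ ↦ norm_nonneg _) (hF.norm_taylorCoeff_le hp v)
      ((summable_geometric_of_lt_one (by positivity) hratio).mul_left M)
  have hremainder : Filter.Tendsto (fun n : ℕ ↦ M * (n * (‖v‖ / η) ^ n)) .atTop (𝓝 0) := by
    simpa using (tendsto_self_mul_const_pow_of_lt_one (by positivity) hratio).const_mul M
  rw [hasSum_iff_tendsto_nat_of_summable_norm hsummable, ← Filter.tendsto_add_atTop_iff_nat 1,
    ← tendsto_sub_nhds_zero_iff]
  refine squeeze_zero_norm (fun n ↦ ?_) (hremainder.comp (Filter.tendsto_add_atTop_nat 1))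
  rw [norm_sub_rev]
  exact hF.norm_sub_taylorSum_le hA hp hpv n

lemma norm_le_iSup_mem {O : Set E} (hF : HasCauchyBoundsOn F M η A) (hOA : O ⊆ A) (hp : p ∈ O) :
    ‖F p‖ ≤ ⨆ z ∈ O, ‖F z‖ := by
  have hM : 0 ≤ M := (norm_nonneg _).trans (hF.norm_le (hOA hp))
  have hbdd : BddAbove (Set.range fun z ↦ ⨆ _ : z ∈ O, ‖F z‖) :=
    ⟨M, Set.forall_mem_range.2 fun z ↦ Real.iSup_le (fun hz ↦ hF.norm_le (hOA hz)) hM⟩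
  simpa [hp] using le_ciSup hbdd p

end Real

variable [NormedSpace ℂ V] [CompleteSpace V] {F : E → V} {M η S : ℝ} {A : Set E} {p v : E}

lemma norm_apply_add_two_smul_le (hF : HasCauchyBoundsOn F M η A) (hA : Convex ℝ A) (hη : 0 < η)
    (hleft : p - v ∈ A) (hright : p + (2 : ℝ) • v ∈ A) (hv : ‖v‖ ≤ η / 14)
    (hS : ∀ t : ℝ, |t| ≤ 1 → ‖F (p + t • v)‖ ≤ S) :
    ‖F (p + (2 : ℝ) • v)‖ ≤ S ^ (1 / 2 : ℝ) * (2 * M) ^ (1 / 2 : ℝ) := by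
  have hmem : ∀ t ∈ Set.Icc (-1 : ℝ) 2, p + t • v ∈ A :=
    (ordConnected_preimage_line hA p v).out (by simpa [← sub_eq_add_neg] using hleft) hright
  have hp : p ∈ A := by simpa using hmem 0 (by norm_num)
  set a : ℕ → V := fun k ↦ (k ! : ℝ)⁻¹ • iteratedFDeriv ℝ k F p fun _ ↦ v
  have ha : ∀ k, ‖a k‖ ≤ M * (1 / 14) ^ k := by
    intro k
    have hM : 0 ≤ M := (norm_nonneg _).trans (hF.norm_le hp)
    refine (hF.norm_taylorCoeff_le hp v k).trans ?_
    gcongr M * ?_ ^ k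
    rw [div_le_iff₀ hη]
    linarith
  have hseries : ∀ t ∈ Set.Icc (-1 : ℝ) 2, ∑' k, (t : ℂ) ^ k • a k = F (p + t • v) := by
    intro t ht
    have htv : ‖t • v‖ < η := by
      have : |t| ≤ 2 := abs_le.2 ⟨by linarith [ht.1], ht.2⟩
      rw [norm_smul, Real.norm_eq_abs]
      nlinarith [norm_nonneg v]
    refine Eq.trans (tsum_congr fun k ↦ ?_) (hF.hasSum_taylor hA hp (hmem t ht) htv).tsum_eq
    have hpow := (iteratedFDeriv ℝ k F p).map_smul_univ (fun _ ↦ t) fun _ ↦ v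
    rw [hpow, Finset.prod_const, Finset.card_univ, Fintype.card_fin, smul_comm,
      ← Complex.ofReal_pow, Complex.coe_smul]
  have h := norm_tsum_two_pow_smul_le ha fun t ht ↦ by
    have ht' := abs_le.1 ht
    rw [hseries t ⟨ht'.1, by linarith⟩]
    exact hS t ht
  rwa [← Complex.ofReal_ofNat, hseries 2 (by norm_num)] at h

lemma norm_apply_add_smul_le (hF : HasCauchyBoundsOn F M η A) (hA : Convex ℝ A) (hη : 0 < η)
    (hp : p ∈ A) (hend : p + (3 : ℝ) • v ∈ A) (hv : ‖v‖ ≤ η / 14)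
    (hS : ∀ t ∈ Set.Icc (0 : ℝ) 2, ‖F (p + t • v)‖ ≤ S) {t : ℝ} (ht : t ∈ Set.Icc (1 : ℝ) 3) :
    ‖F (p + t • v)‖ ≤ S ^ (1 / 2 : ℝ) * (2 * M) ^ (1 / 2 : ℝ) := by
  have hmem : ∀ s ∈ Set.Icc (0 : ℝ) 3, p + s • v ∈ A :=
    (ordConnected_preimage_line hA p v).out (by simpa using hp) hend
  obtain ⟨r, rfl⟩ : ∃ r, t = 1 + 2 * r := ⟨(t - 1) / 2, by ring⟩
  have hr0 : 0 ≤ r := by linarith [ht.1]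
  have hr1 : r ≤ 1 := by linarith [ht.2]
  have hleft : p + v - r • v = p + (1 - r) • v := by module
  have hshift : ∀ s : ℝ, p + v + s • r • v = p + (1 + s * r) • v := fun s ↦ by module
  have hrv : ‖r • v‖ ≤ η / 14 := by
    rw [norm_smul, Real.norm_of_nonneg hr0]
    exact (mul_le_of_le_one_left (norm_nonneg v) hr1).trans hv
  rw [← hshift]
  refine hF.norm_apply_add_two_smul_le hA hη (hleft ▸ hmem _ ⟨by linarith, by linarith⟩)
    (hshift 2 ▸ hmem _ ⟨by linarith, by linarith⟩) hrv fun s hs ↦ ?_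
  have hsr : |s * r| ≤ 1 := by
    rw [abs_mul, abs_of_nonneg hr0]
    exact mul_le_one₀ hs hr0 hr1
  rw [hshift]
  exact hS _ ⟨by linarith [(abs_le.1 hsr).1], by linarith [(abs_le.1 hsr).2]⟩

lemma norm_apply_add_smul_le_of_chain (hF : HasCauchyBoundsOn F M η A) (hA : Convex ℝ A)
    (hη : 0 < η) (hp : p ∈ A) (m : ℕ) (hend : p + (m + 2 : ℝ) • v ∈ A) (hv : ‖v‖ ≤ η / 14)
    (hS : ∀ t ∈ Set.Icc (0 : ℝ) 2, ‖F (p + t • v)‖ ≤ S) {t : ℝ}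
    (ht : t ∈ Set.Icc (m : ℝ) (m + 2)) :
    ‖F (p + t • v)‖ ≤ (2 * M) ^ (1 - (1 / 2 : ℝ) ^ m) * S ^ ((1 / 2 : ℝ) ^ m) := by
  have hM : 0 ≤ M := (norm_nonneg _).trans (hF.norm_le hp)
  have hS0 : 0 ≤ S := (norm_nonneg _).trans (hS 0 (by norm_num))
  have hmem : ∀ s ∈ Set.Icc (0 : ℝ) (m + 2), p + s • v ∈ A :=
    (ordConnected_preimage_line hA p v).out (by simpa using hp) hend
  induction m generalizing t with
  | zero => simpa using hS t (by simpa using ht)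
  | succ m ih =>
    push_cast at ht hmem
    have hm : (0 : ℝ) ≤ m := m.cast_nonneg
    have hshift : ∀ s : ℝ, p + (m : ℝ) • v + s • v = p + (m + s) • v := fun s ↦ by module
    have ih_bound : ∀ s ∈ Set.Icc (0 : ℝ) 2, ‖F (p + (m : ℝ) • v + s • v)‖ ≤
        (2 * M) ^ (1 - (1 / 2 : ℝ) ^ m) * S ^ ((1 / 2 : ℝ) ^ m) := fun s hs ↦ hshift s ▸
      ih (hmem _ ⟨by linarith, by linarith⟩) ⟨by linarith [hs.1], by linarith [hs.2]⟩
        fun s' hs' ↦ hmem s' ⟨hs'.1, by linarith [hs'.2]⟩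
    have hstep := hF.norm_apply_add_smul_le hA hη (hmem m ⟨hm, by linarith⟩)
      (hshift 3 ▸ hmem _ ⟨by linarith, by linarith⟩) hv ih_bound
      (t := t - m) ⟨by linarith [ht.1], by linarith [ht.2]⟩
    rw [hshift, add_sub_cancel] at hstep
    have hpow : (1 / 2 : ℝ) ^ m ≤ 1 := pow_le_one₀ (by norm_num) (by norm_num)
    refine hstep.trans_eq ?_
    rw [Real.mul_rpow (by positivity) (by positivity), ← Real.rpow_mul (by positivity),
      ← Real.rpow_mul hS0, mul_right_comm,
      ← Real.rpow_add_of_nonneg (by positivity) (by linarith) (by norm_num)]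
    congr 2
    all_goals ring

lemma norm_le_of_norm_le_on_ball {x z₀ : E} (hF : HasCauchyBoundsOn F M η (segment ℝ z₀ x))
    (hη : 0 < η) {r : ℝ} (hS : ∀ z ∈ ball z₀ r, ‖F z‖ ≤ S) (m : ℕ)
    (hmη : ‖x - z₀‖ ≤ (m + 2) * (η / 14)) (hmr : ‖x - z₀‖ < (m + 2) * (r / 2)) :
    ‖F x‖ ≤ (2 * M) ^ (1 - (1 / 2 : ℝ) ^ m) * S ^ ((1 / 2 : ℝ) ^ m) := by
  obtain ⟨v, hv⟩ : ∃ v : E, (m + 2 : ℝ) • v = x - z₀ :=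
    ⟨_, smul_inv_smul₀ (by positivity) (x - z₀)⟩
  have hnorm : ‖x - z₀‖ = (m + 2) * ‖v‖ := by
    rw [← hv, norm_smul, Real.norm_of_nonneg (by positivity)]
  rw [hnorm] at hmη hmr
  have hvη : ‖v‖ ≤ η / 14 := le_of_mul_le_mul_left hmη (by positivity)
  have hvr : ‖v‖ < r / 2 := lt_of_mul_lt_mul_left hmr (by positivity)
  have hend : z₀ + (m + 2 : ℝ) • v = x := by rw [hv, add_sub_cancel]
  have hinit : ∀ t ∈ Set.Icc (0 : ℝ) 2, ‖F (z₀ + t • v)‖ ≤ S := by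
    intro t ht
    refine hS _ ?_
    rw [mem_ball_iff_norm, add_sub_cancel_left, norm_smul, Real.norm_of_nonneg ht.1]
    nlinarith [ht.2, norm_nonneg v]
  have h := hF.norm_apply_add_smul_le_of_chain (convex_segment z₀ x) hη (left_mem_segment ℝ z₀ x) m
    (hend ▸ right_mem_segment ℝ z₀ x) hvη hinit (t := m + 2) ⟨by linarith, le_rfl⟩
  rwa [hend] at h

end HasCauchyBoundsOn

theorem analytic_conditional_stability_general [NormedSpace ℂ V] [CompleteSpace V] {η : ℝ}
    (hη : 0 < η) {K O : Set E} {z₀ : E} (hK : Bornology.IsBounded K) (hKz₀ : StarConvex ℝ z₀ K)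
    (hO : O ∈ 𝓝 z₀) (hOK : O ⊆ K) :
    ∃ μ ∈ Set.Ioo (0 : ℝ) 1, ∀ (M : ℝ) (F : E → V), HasCauchyBoundsOn F M η K →
      ∀ x ∈ K, ‖F x‖ ≤ (2 * M) ^ (1 - μ) * (⨆ z ∈ O, ‖F z‖) ^ μ := by
  obtain ⟨r, hr, hball⟩ := Metric.mem_nhds_iff.1 hO
  obtain ⟨D, hD⟩ := hK.subset_closedBall z₀
  obtain ⟨m, hm⟩ := exists_nat_gt (D / min (η / 14) (r / 2))
  have hlength : ∀ x ∈ K, ‖x - z₀‖ < ((m + 1 : ℕ) + 2) * min (η / 14) (r / 2) := by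
    intro x hx
    have hmin : 0 < min (η / 14) (r / 2) := by positivity
    rw [div_lt_iff₀ hmin] at hm
    push_cast
    linarith [mem_closedBall_iff_norm.1 (hD hx)]
  refine ⟨(1 / 2) ^ (m + 1), ⟨by positivity, pow_lt_one₀ (by norm_num) (by norm_num) (by simp)⟩,
    fun M F hF x hx ↦ ?_⟩
  refine (hF.mono (hKz₀.segment_subset hx)).norm_le_of_norm_le_on_ball hη
    (fun z hz ↦ hF.norm_le_iSup_mem hOK (hball hz)) (m + 1)
    ((hlength x hx).le.trans ?_) ((hlength x hx).trans_le ?_)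
  · gcongr
    exact min_le_left _ _
  · gcongr
    exact min_le_right _ _

end CauchyBounds

theorem analytic_conditional_stability
    (d : ℕ) (hd : 1 ≤ d) (η : ℝ) (hη : 0 < η)
    (O : Set (EuclideanSpace ℝ (Fin d))) (hO : O.Nonempty) (hOopen : IsOpen O)
    (hOsub : O ⊆ ball (0 : EuclideanSpace ℝ (Fin d)) 1) :
    ∃ μ ∈ Set.Ioo (0 : ℝ) 1,
      ∀ (M : ℝ), 0 < M →
      ∀ F : EuclideanSpace ℝ (Fin d) → ℂ,
        ContDiffOn ℝ (⊤ : ℕ∞) F (ball (0 : EuclideanSpace ℝ (Fin d)) 2) →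
        (∀ (k : ℕ) (x : EuclideanSpace ℝ (Fin d)), x ∈ ball (0 : EuclideanSpace ℝ (Fin d)) 2 →
          ‖iteratedFDerivWithin ℝ k F (ball (0 : EuclideanSpace ℝ (Fin d)) 2) x‖ ≤
            M * (Nat.factorial k) / η ^ k) →
        ∀ x ∈ ball (0 : EuclideanSpace ℝ (Fin d)) 1,
          ‖F x‖ ≤ (2 * M) ^ (1 - μ) * (⨆ z ∈ O, ‖F z‖) ^ μ := by
  obtain ⟨z₀, hz₀⟩ := hO
  obtain ⟨μ, hμ, h⟩ := analytic_conditional_stability_general (V := ℂ) hη isBounded_ball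
    ((convex_ball 0 1).starConvex (hOsub hz₀)) (hOopen.mem_nhds hz₀) hOsub
  exact ⟨μ, hμ, fun M _ F hF hbound ↦ h M F
    ((hasCauchyBoundsOn_of_isOpen isOpen_ball hF hbound).mono (ball_subset_ball one_le_two))⟩
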